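/- arXiv:2310.02387 — 3 statements merged into one kernel-verified Lean document; each statement's English description precedes it below -/
import Mathlib

section
/- Let n ≥ 4 be an even integer, let A be the matrix defined below, and let i ∈ {0,…,n/2−2}. Consider any fictitious play sequence (i^{(t)}, j^{(t)}) for the identical-payoff game with matrix A with (i^{(1)}, j^{(1)}) = (n, 1). Suppose T₀ ≥ 1 is a round such that: (i^{(T₀)}, j^{(T₀)}) = (n−i, i+1) and the pair (n−i, i+1) is not played at any round t < T₀; either T₀ = 1 or (i^{(T₀−1)}, j^{(T₀−1)}) = (n−i, n−i+1); R^{(T₀)}_r = 0 for every row r with i+1 ≤ r ≤ n−i−1; and C^{(T₀)}_c = 0 for every column c with i+2 ≤ c ≤ n−i. Then there exists a round T₁ > T₀ such that: (i) (i^{(T₁)}, j^{(T₁)}) = (i+1, i+1) and the pair (i+1, i+1) is not played at any round t < T₁; (ii) (i^{(t)}, j^{(t)}) = (n−i, i+1) for every t with T₀ ≤ t ≤ T₁−1; (iii) C^{(T₁)}_{i+1} ≥ (4i+1)·(R^{(T₀)}_{n−i} + 1); (iv) R^{(T₁)}_r = 0 for every row r with i+2 ≤ r ≤ n−i−1, and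 C^{(T₁)}_c = 0 for every column c with i+2 ≤ c ≤ n−i. -/
/-!
Write `ρ` for the cumulative utility of row `n - i` at round `T0`. While `(n - i, i + 1)` is
played, each round adds `4i + 1` to row `n - i`, `4i + 2` to row `i + 1` and nothing to any other
row; it adds `4i + 1` to column `i + 1` and at most `4i` to any other column. Both strategies are
optimal at `T0`, so column `i + 1` stays the unique best column, and the only row that can ever
replace `n - i` is `i + 1`. As row `i + 1` starts from `0`, after `k` rounds it is best only if
`k ≥ ρ`, and it is the unique best row once `k > ρ`. So the switch happens, after some `k ≥ ρ`
rounds; take `T1 = T0 + k`, the first round after `T0` at which the row is not `n - i`.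

In the bound on column `i + 1` the summand `+ 1` has two sources. If `T0 = 1` then `ρ = 0` while
`k ≥ 1`. Otherwise row `n - i` was played at round `T0 - 1`, so column `i + 1` already has
cumulative utility at least `4i + 1` at round `T0`. Finally, `(i + 1, i + 1)` cannot have been
played before `T0`, because column `i + 1` would have given row `i + 1` a positive utility.
-/

open Finset

/-- The `n × n` payoff matrix `A` (1-based indices), closed form:
for `i ∈ {0,…,n/2−1}`: `A_{i+1,i+1} = 4i+2`, `A_{i+1,n−i} = 4i+3`, `A_{n−i,i+1} = 4i+1`;
for `i ∈ {1,…,n/2−1}`: `A_{n−i,n−i+1} = 4i`; all other entries `0`. -/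
noncomputable def Amat (n i j : ℕ) : ℝ :=
  if i = j ∧ 1 ≤ i ∧ i ≤ n / 2 then 4 * (i : ℝ) - 2
  else if i + j = n + 1 ∧ 1 ≤ i ∧ i ≤ n / 2 then 4 * (i : ℝ) - 1
  else if i + j = n + 1 ∧ 1 ≤ j ∧ j ≤ n / 2 then 4 * (j : ℝ) - 3
  else if j = i + 1 ∧ n / 2 + 1 ≤ i ∧ i ≤ n - 1 then 4 * ((n : ℝ) - (i : ℝ))
  else 0

/-- `x` is a probability vector over coordinates `{1,…,n}`. -/
def ProbVec (n : ℕ) (x : ℕ → ℝ) : Prop :=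
  (∀ k ∈ Finset.Icc 1 n, 0 ≤ x k) ∧ ∑ k ∈ Finset.Icc 1 n, x k = 1

/-- The common payoff `xᵀ A y`. -/
noncomputable def pay (n : ℕ) (x y : ℕ → ℝ) : ℝ :=
  ∑ i ∈ Finset.Icc 1 n, ∑ j ∈ Finset.Icc 1 n, x i * Amat n i j * y j

/-- `(x, y)` is an `ε`-approximate Nash equilibrium of the identical-payoff game with matrix `A`. -/
def IsNashEq (n : ℕ) (ε : ℝ) (x y : ℕ → ℝ) : Prop :=
  ProbVec n x ∧ ProbVec n y ∧
  (∀ x', ProbVec n x' → pay n x y ≥ pay n x' y - ε) ∧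
  (∀ y', ProbVec n y' → pay n x y ≥ pay n x y' - ε)

/-- `(I t, J t)` (for `t = 1, 2, …`) is a fictitious play sequence for the
identical-payoff game with matrix `A`. -/
def IsFPSeq (n : ℕ) (I J : ℕ → ℕ) : Prop :=
  (∀ t, 1 ≤ t → I t ∈ Finset.Icc 1 n ∧ J t ∈ Finset.Icc 1 n) ∧
  ∀ t, 2 ≤ t →
    (∀ i ∈ Finset.Icc 1 n,
      ∑ s ∈ Finset.Icc 1 (t - 1), Amat n i (J s) ≤
        ∑ s ∈ Finset.Icc 1 (t - 1), Amat n (I t) (J s)) ∧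
    (∀ j ∈ Finset.Icc 1 n,
      ∑ s ∈ Finset.Icc 1 (t - 1), Amat n (I s) j ≤
        ∑ s ∈ Finset.Icc 1 (t - 1), Amat n (I s) (J t))

/-- Cumulative utility of row `r` at round `t`. -/
noncomputable def Rcum (n : ℕ) (J : ℕ → ℕ) (t r : ℕ) : ℝ :=
  ∑ s ∈ Finset.Icc 1 (t - 1), Amat n r (J s)

/-- Cumulative utility of column `c` at round `t`. -/
noncomputable def Ccum (n : ℕ) (I : ℕ → ℕ) (t c : ℕ) : ℝ :=
  ∑ s ∈ Finset.Icc 1 (t - 1), Amat n (I s) c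

/-- Empirical strategy at round `T` of the player playing the sequence `I`. -/
noncomputable def empir (T : ℕ) (I : ℕ → ℕ) (k : ℕ) : ℝ :=
  (1 / (T : ℝ)) * ∑ s ∈ Finset.Icc 1 T, if I s = k then (1 : ℝ) else 0

/-- The `k`-th standard basis vector (pure strategy `k`). -/
noncomputable def purevec (k : ℕ) : ℕ → ℝ := fun m => if m = k then 1 else 0

lemma Amat_nonneg (n r c : ℕ) : 0 ≤ Amat n r c := by
  unfold Amat
  split_ifs with h1 h2 h3 h4
  · have : (1 : ℝ) ≤ r := by exact_mod_cast h1.2.1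
    linarith
  · have : (1 : ℝ) ≤ r := by exact_mod_cast h2.2.1
    linarith
  · have : (1 : ℝ) ≤ c := by exact_mod_cast h3.2.1
    linarith
  · have : (r : ℝ) ≤ n := by exact_mod_cast (by omega : r ≤ n)
    linarith
  · exact le_rfl

lemma Amat_diag {n i : ℕ} (hi : i + 1 ≤ n / 2) : Amat n (i + 1) (i + 1) = 4 * (i : ℝ) + 2 := by
  unfold Amat
  rw [if_pos (by omega)]
  push_cast
  ring

lemma Amat_anti {n i : ℕ} (hi : i + 1 ≤ n / 2) : Amat n (n - i) (i + 1) = 4 * (i : ℝ) + 1 := by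
  unfold Amat
  rw [if_neg (by omega), if_neg (by omega), if_pos (by omega)]
  push_cast
  ring

/-- Column `i + 1` is supported on the rows `i + 1` and `n - i`. -/
lemma Amat_col_zero {n i r : ℕ} (hi : i + 1 ≤ n / 2) (h1 : r ≠ i + 1) (h2 : r ≠ n - i) :
    Amat n r (i + 1) = 0 := by
  unfold Amat
  rw [if_neg (by omega), if_neg (by omega), if_neg (by omega), if_neg (by omega)]

/-- Row `n - i` is supported on the columns `i + 1` and `n - i + 1`. -/
lemma Amat_row_zero {n i c : ℕ} (hi : i + 1 ≤ n / 2) (h1 : c ≠ i + 1) (h2 : c ≠ n - i + 1) :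
    Amat n (n - i) c = 0 := by
  unfold Amat
  rw [if_neg (by omega), if_neg (by omega), if_neg (by omega), if_neg (by omega)]

lemma Amat_row_le {n i c : ℕ} (hi : i + 1 ≤ n / 2) (h1 : c ≠ i + 1) :
    Amat n (n - i) c ≤ 4 * (i : ℝ) := by
  unfold Amat
  rw [if_neg (by omega), if_neg (by omega), if_neg (by omega)]
  split_ifs
  · rw [Nat.cast_sub (by omega)]
    linarith
  · positivity

lemma Rcum_succ (n : ℕ) (J : ℕ → ℕ) {t : ℕ} (ht : 1 ≤ t) (r : ℕ) :
    Rcum n J (t + 1) r = Rcum n J t r + Amat n r (J t) := by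
  obtain ⟨t, rfl⟩ := Nat.exists_eq_add_of_le' ht
  simp only [Rcum, Nat.add_sub_cancel]
  rw [Finset.sum_Icc_succ_top (by omega)]

lemma Ccum_succ (n : ℕ) (I : ℕ → ℕ) {t : ℕ} (ht : 1 ≤ t) (c : ℕ) :
    Ccum n I (t + 1) c = Ccum n I t c + Amat n (I t) c := by
  obtain ⟨t, rfl⟩ := Nat.exists_eq_add_of_le' ht
  simp only [Ccum, Nat.add_sub_cancel]
  rw [Finset.sum_Icc_succ_top (by omega)]

lemma Rcum_const (n : ℕ) (J : ℕ → ℕ) {T c : ℕ} (hT : 1 ≤ T) (r k : ℕ)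
    (h : ∀ m < k, J (T + m) = c) :
    Rcum n J (T + k) r = Rcum n J T r + k * Amat n r c := by
  induction k with
  | zero => simp
  | succ k ih =>
    rw [← add_assoc, Rcum_succ n J (by omega), ih fun m hm => h m (by omega), h k (by omega)]
    push_cast
    ring

lemma Ccum_const (n : ℕ) (I : ℕ → ℕ) {T r : ℕ} (hT : 1 ≤ T) (c k : ℕ)
    (h : ∀ m < k, I (T + m) = r) :
    Ccum n I (T + k) c = Ccum n I T c + k * Amat n r c := by
  induction k with
  | zero => simp
  | succ k ih =>
    rw [← add_assoc, Ccum_succ n I (by omega), ih fun m hm => h m (by omega), h k (by omega)]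
    push_cast
    ring

/-- The row played is optimal at every round; at round `1` all utilities are `0`. -/
lemma IsFPSeq.row_opt {n : ℕ} {I J : ℕ → ℕ} (h : IsFPSeq n I J) {t r : ℕ} (ht : 1 ≤ t)
    (hr : r ∈ Finset.Icc 1 n) : Rcum n J t r ≤ Rcum n J t (I t) := by
  rcases ht.eq_or_lt with rfl | ht
  · simp [Rcum]
  · exact (h.2 t ht).1 r hr

/-- The column played is optimal at every round; at round `1` all utilities are `0`. -/
lemma IsFPSeq.col_opt {n : ℕ} {I J : ℕ → ℕ} (h : IsFPSeq n I J) {t c : ℕ} (ht : 1 ≤ t)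
    (hc : c ∈ Finset.Icc 1 n) : Ccum n I t c ≤ Ccum n I t (J t) := by
  rcases ht.eq_or_lt with rfl | ht
  · simp [Ccum]
  · exact (h.2 t ht).2 c hc

lemma Amat_le_Rcum (n : ℕ) (J : ℕ → ℕ) {t s : ℕ} (hs : 1 ≤ s) (hst : s < t) (r : ℕ) :
    Amat n r (J s) ≤ Rcum n J t r :=
  Finset.single_le_sum (f := fun s => Amat n r (J s)) (fun _ _ => Amat_nonneg _ _ _)
    (Finset.mem_Icc.2 ⟨hs, by omega⟩)

lemma Amat_le_Ccum (n : ℕ) (I : ℕ → ℕ) {t s : ℕ} (hs : 1 ≤ s) (hst : s < t) (c : ℕ) :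
    Amat n (I s) c ≤ Ccum n I t c :=
  Finset.single_le_sum (f := fun s => Amat n (I s) c) (fun _ _ => Amat_nonneg _ _ _)
    (Finset.mem_Icc.2 ⟨hs, by omega⟩)

/-- As long as row `n - i` has been played since round `T0`, column `i + 1` is the best reply. -/
lemma col_persist {n i : ℕ} (hi : i + 1 ≤ n / 2) {I J : ℕ → ℕ} (hFP : IsFPSeq n I J)
    {T : ℕ} (hT : 1 ≤ T) (hJ : J T = i + 1) {k : ℕ} (h : ∀ m < k, I (T + m) = n - i) :
    J (T + k) = i + 1 := by
  rcases Nat.eq_zero_or_pos k with rfl | hk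
  · exact hJ
  by_contra hne
  have h1 := hFP.col_opt (t := T + k) (c := i + 1) (by omega) (Finset.mem_Icc.2 (by omega))
  have h2 := hFP.col_opt hT (hFP.1 (T + k) (by omega)).2
  rw [Ccum_const n I hT _ k h, Ccum_const n I hT _ k h, Amat_anti hi] at h1
  rw [hJ] at h2
  have h3 := Amat_row_le hi hne
  have hk' : (0 : ℝ) < k := by exact_mod_cast hk
  nlinarith

/-- After `k ≥ 1` rounds of column `i + 1`, the row played is `n - i` or `i + 1`; the former forces
`k` to be at most the head start of row `n - i`, the latter at least. -/
lemma row_cases {n i : ℕ} (hi : i + 1 ≤ n / 2) {I J : ℕ → ℕ} (hFP : IsFPSeq n I J)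
    {T : ℕ} (hT : 1 ≤ T) (hI : I T = n - i) (hR : Rcum n J T (i + 1) = 0) {k : ℕ} (hk : 0 < k)
    (h : ∀ m < k, J (T + m) = i + 1) :
    (I (T + k) = n - i ∧ (k : ℝ) ≤ Rcum n J T (n - i)) ∨
      (I (T + k) = i + 1 ∧ Rcum n J T (n - i) ≤ k) := by
  have hk' : (0 : ℝ) < k := by exact_mod_cast hk
  have h1 := hFP.row_opt (t := T + k) (r := i + 1) (by omega) (Finset.mem_Icc.2 (by omega))
  have h2 := hFP.row_opt (t := T + k) (r := n - i) (by omega) (Finset.mem_Icc.2 (by omega))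
  have h3 := hFP.row_opt hT (hFP.1 (T + k) (by omega)).1
  rw [hI] at h3
  rw [Rcum_const n J hT _ k h, Rcum_const n J hT _ k h, Amat_diag hi, hR] at h1
  rw [Rcum_const n J hT _ k h, Rcum_const n J hT _ k h, Amat_anti hi] at h2
  by_cases e1 : I (T + k) = n - i
  · rw [e1, Amat_anti hi] at h1
    exact Or.inl ⟨e1, by linarith⟩
  by_cases e2 : I (T + k) = i + 1
  · rw [e2, Amat_diag hi, hR] at h2
    exact Or.inr ⟨e2, by linarith⟩
  rw [Amat_col_zero hi e2 e1] at h2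
  have : (0 : ℝ) ≤ i := by positivity
  nlinarith

/-- first induction step: from the first play of `(n−i, i+1)` to the first
play of `(i+1, i+1)`. -/
theorem fp_step_one
    (n : ℕ) (hn : 4 ≤ n) (hneven : Even n) (i : ℕ) (hi : i ≤ n / 2 - 2)
    (I J : ℕ → ℕ) (hFP : IsFPSeq n I J) (hI1 : I 1 = n) (hJ1 : J 1 = 1)
    (T0 : ℕ) (hT0 : 1 ≤ T0)
    (hplay : I T0 = n - i ∧ J T0 = i + 1)
    (hfirst : ∀ t, 1 ≤ t → t < T0 → (I t, J t) ≠ (n - i, i + 1))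
    (hprev : T0 = 1 ∨ (I (T0 - 1) = n - i ∧ J (T0 - 1) = n - i + 1))
    (hR : ∀ r, i + 1 ≤ r → r ≤ n - i - 1 → Rcum n J T0 r = 0)
    (hC : ∀ c, i + 2 ≤ c → c ≤ n - i → Ccum n I T0 c = 0) :
    ∃ T1, T0 < T1 ∧
      (I T1 = i + 1 ∧ J T1 = i + 1) ∧
      (∀ t, 1 ≤ t → t < T1 → (I t, J t) ≠ (i + 1, i + 1)) ∧
      (∀ t, T0 ≤ t → t ≤ T1 - 1 → I t = n - i ∧ J t = i + 1) ∧
      Ccum n I T1 (i + 1) ≥ (4 * (i : ℝ) + 1) * (Rcum n J T0 (n - i) + 1) ∧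
      (∀ r, i + 2 ≤ r → r ≤ n - i - 1 → Rcum n J T1 r = 0) ∧
      (∀ c, i + 2 ≤ c → c ≤ n - i → Ccum n I T1 c = 0) := by
  have hi' : i + 1 ≤ n / 2 := by omega
  have hin : i + 1 ≠ n - i := by omega
  have hR0 : Rcum n J T0 (i + 1) = 0 := hR _ le_rfl (by omega)
  have hex : ∃ k, I (T0 + k) ≠ n - i := by
    by_contra! hall
    obtain ⟨k, hk⟩ := exists_nat_gt (max 0 (Rcum n J T0 (n - i)))
    rw [max_lt_iff] at hk
    have hk0 : 0 < k := by exact_mod_cast hk.1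
    rcases row_cases hi' hFP hT0 hplay.1 hR0 hk0
      (fun m _ => col_persist hi' hFP hT0 hplay.2 fun j _ => hall j) with ⟨_, h⟩ | ⟨h, _⟩
    · linarith
    · exact hin (h ▸ hall k)
  classical
  obtain ⟨k, hk, hmin⟩ : ∃ k, I (T0 + k) ≠ n - i ∧ ∀ m < k, I (T0 + m) = n - i :=
    ⟨Nat.find hex, Nat.find_spec hex, fun m hm => not_not.1 (Nat.find_min hex hm)⟩
  have hJ : ∀ m ≤ k, J (T0 + m) = i + 1 := fun m hm =>
    col_persist hi' hFP hT0 hplay.2 fun j hj => hmin j (by omega)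
  have hk0 : 0 < k := by
    rcases Nat.eq_zero_or_pos k with rfl | h
    · exact absurd hplay.1 hk
    · exact h
  obtain ⟨hIk, hρ⟩ := (row_cases hi' hFP hT0 hplay.1 hR0 hk0
    (fun m hm => hJ m hm.le)).resolve_left fun h => hk h.1
  refine ⟨T0 + k, by omega, ⟨hIk, hJ k le_rfl⟩, ?_, ?_, ?_, ?_, ?_⟩
  · intro t ht1 ht h
    rw [Prod.mk.injEq] at h
    rcases lt_or_ge t T0 with hlt | hge
    · have := Amat_le_Rcum n J ht1 hlt (i + 1)
      rw [h.2, Amat_diag hi', hR0] at this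
      have : (0 : ℝ) ≤ i := by positivity
      linarith
    · obtain ⟨m, rfl⟩ := Nat.exists_eq_add_of_le hge
      have := hmin m (by omega)
      omega
  · intro t ht ht'
    obtain ⟨m, rfl⟩ := Nat.exists_eq_add_of_le ht
    exact ⟨hmin m (by omega), hJ m (by omega)⟩
  · rw [Ccum_const n I hT0 _ k hmin, Amat_anti hi']
    have hi0 : (0 : ℝ) ≤ i := by positivity
    rcases hT0.eq_or_lt with rfl | hlt
    · have hk1 : (1 : ℝ) ≤ k := by exact_mod_cast hk0
      simp only [Rcum, Ccum, Nat.sub_self, Finset.Icc_eq_empty_of_lt one_pos, Finset.sum_empty]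
      nlinarith
    · have hprev' := hprev.resolve_left (by omega)
      have := Amat_le_Ccum n I (t := T0) (s := T0 - 1) (by omega) (by omega) (i + 1)
      rw [hprev'.1, Amat_anti hi'] at this
      nlinarith
  · intro r hr1 hr2
    rw [Rcum_const n J hT0 _ k fun m hm => hJ m hm.le, hR r (by omega) hr2,
      Amat_col_zero hi' (by omega) (by omega)]
    simp
  · intro c hc1 hc2
    rw [Ccum_const n I hT0 _ k hmin, hC c hc1 hc2, Amat_row_zero hi' (by omega) (by omega)]
    simp
end

section
/- Let n ≥ 4 be an even integer, let A be the matrix defined below, and let i ∈ {0,…,n/2−2}. Then for every probability vector y ∈ ℝ^n (nonnegative entries summing to 1), the sum of the utilities of the rows i+2 through n−i−1 satisfies Σ_{k=i+2}^{n−i−1} (Ay)_k ≥ Σ_{k=i+2}^{n−i−1} y_k. -/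
/-!
All entries of `A` are nonnegative and every antidiagonal entry `A_{k,n+1-k}` is at least `1`, so
`(Ay)_k ≥ y_{n+1-k}` for each row `k`. The reflection `k ↦ n+1-k` maps the block
`{i+2,…,n-i-1}` to itself, so summing over the block gives the claim.
-/

open Finset

theorem Amat_nonneg_s16 (n i j : ℕ) (hi : i ≤ n) : 0 ≤ Amat n i j := by
  have hin : (i : ℝ) ≤ n := by exact_mod_cast hi
  unfold Amat
  split_ifs with h1 h2 h3 h4
  · have : (1 : ℝ) ≤ i := by exact_mod_cast h1.2.1
    linarith
  · have : (1 : ℝ) ≤ i := by exact_mod_cast h2.2.1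
    linarith
  · have : (1 : ℝ) ≤ j := by exact_mod_cast h3.2.1
    linarith
  · linarith
  · exact le_rfl

theorem one_le_Amat_antidiag (n k : ℕ) (hn : Even n) (hk1 : 1 ≤ k) (hkn : k ≤ n) :
    1 ≤ Amat n k (n + 1 - k) := by
  obtain ⟨m, hm⟩ := hn
  unfold Amat
  -- As `n` is even, the antidiagonal avoids the diagonal, so the first case is vacuous.
  rw [if_neg (by omega)]
  by_cases h : k ≤ n / 2
  · rw [if_pos (by omega)]
    have : (1 : ℝ) ≤ k := by exact_mod_cast hk1
    linarith
  · rw [if_neg (by omega), if_pos (by omega)]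
    have : (1 : ℝ) ≤ ((n + 1 - k : ℕ) : ℝ) := by exact_mod_cast (by omega : 1 ≤ n + 1 - k)
    linarith

/-- for any probability vector `y`, the total utility of the middle rows
`i+2, …, n−i−1` is at least the mass `y` puts on those coordinates. -/
theorem middle_rows_sum
    (n : ℕ) (hn : 4 ≤ n) (hneven : Even n) (i : ℕ) (hi : i ≤ n / 2 - 2)
    (y : ℕ → ℝ) (hy : ProbVec n y) :
    ∑ k ∈ Finset.Icc (i + 2) (n - i - 1), (∑ j ∈ Finset.Icc 1 n, Amat n k j * y j) ≥
      ∑ k ∈ Finset.Icc (i + 2) (n - i - 1), y k := by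
  have hrefl : ∑ k ∈ Finset.Icc (i + 2) (n - i - 1), y k =
      ∑ k ∈ Finset.Icc (i + 2) (n - i - 1), y (n + 1 - k) := by
    refine Finset.sum_bij' (fun k _ => n + 1 - k) (fun k _ => n + 1 - k) ?_ ?_ ?_ ?_ ?_
    · intro k hk
      simp only [Finset.mem_Icc] at hk ⊢
      omega
    · intro k hk
      simp only [Finset.mem_Icc] at hk ⊢
      omega
    · intro k hk
      simp only [Finset.mem_Icc] at hk
      omega
    · intro k hk
      simp only [Finset.mem_Icc] at hk
      omega
    · intro k hk
      simp only [Finset.mem_Icc] at hk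
      congr 1
      omega
  rw [hrefl, ge_iff_le]
  refine Finset.sum_le_sum fun k hk => ?_
  rw [Finset.mem_Icc] at hk
  have hmem : n + 1 - k ∈ Finset.Icc 1 n := by
    rw [Finset.mem_Icc]
    omega
  calc y (n + 1 - k) ≤ Amat n k (n + 1 - k) * y (n + 1 - k) :=
        le_mul_of_one_le_left (hy.1 _ hmem)
          (one_le_Amat_antidiag n k hneven (by omega) (by omega))
    _ ≤ ∑ j ∈ Finset.Icc 1 n, Amat n k j * y j :=
        Finset.single_le_sum (f := fun j => Amat n k j * y j)
          (fun j hj => mul_nonneg (Amat_nonneg_s16 n k j (by omega)) (hy.1 j hj)) hmem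
end

section
/- Let n ≥ 4 be an even integer and let A be the matrix defined below. Consider any fictitious play sequence (i^{(t)}, j^{(t)}) for the identical-payoff game with matrix A with (i^{(1)}, j^{(1)}) = (n, 1). Then for every round t ≥ 1, the entry A_{i^{(t)}, j^{(t)}} is nonzero, and the sequence of played values is nondecreasing: A_{i^{(t)}, j^{(t)}} ≤ A_{i^{(t+1)}, j^{(t+1)}} for every t ≥ 1. -/
/-!
If a player moves from a strategy to another one, the new strategy must do at least as well as the
old one against the opponent's last move: the old one was optimal before that move, the new one is
optimal after it. So with `(i, j)` the current pair and `(i', j')` the next one,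
`A i j ≤ A i' j` and `A i j ≤ A i j'` (`FP_row_le`, `FP_col_le`).

The nonzero entries of `A` form a path along which the values `1, 2, 3, …` increase, consecutive
entries sharing alternately a column and a row, and every row and column holds at most two of them.
Hence a nonzero entry is the strict maximum of its row or of its column, and the two inequalities
force `i' = i` or `j' = j` (`row_eq_or_col_eq`). In either case one of them reads
`A i j ≤ A i' j'`, and nonvanishing propagates because the entries are nonnegative.
-/

open Finset

/-- The matrix `Amat` with values in `ℕ`; truncated subtraction is harmless because each branch
guarantees that the subtrahend is the smaller number. -/
def natAmat (n i j : ℕ) : ℕ :=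
  if i = j ∧ 1 ≤ i ∧ i ≤ n / 2 then 4 * i - 2
  else if i + j = n + 1 ∧ 1 ≤ i ∧ i ≤ n / 2 then 4 * i - 1
  else if i + j = n + 1 ∧ 1 ≤ j ∧ j ≤ n / 2 then 4 * j - 3
  else if j = i + 1 ∧ n / 2 + 1 ≤ i ∧ i ≤ n - 1 then 4 * (n - i)
  else 0

theorem Amat_eq_natAmat (n i j : ℕ) : Amat n i j = (natAmat n i j : ℝ) := by
  unfold Amat natAmat
  split_ifs with h1 h2 h3 h4
  · rw [Nat.cast_sub (by omega)]; push_cast; ring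
  · rw [Nat.cast_sub (by omega)]; push_cast; ring
  · rw [Nat.cast_sub (by omega)]; push_cast; ring
  · rw [Nat.cast_mul, Nat.cast_sub (by omega)]; push_cast; ring
  · simp

/-- A nonzero entry is the strict maximum of its row or of its column. -/
theorem row_eq_or_col_eq {n i j i' j' : ℕ} (hn : Even n) (h0 : natAmat n i j ≠ 0)
    (hrow : natAmat n i j ≤ natAmat n i' j) (hcol : natAmat n i j ≤ natAmat n i j') :
    i' = i ∨ j' = j := by
  obtain ⟨m, rfl⟩ := hn
  have hm : (m + m) / 2 = m := by omega
  simp only [natAmat, hm] at h0 hrow hcol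
  -- The entries `4i+2` and `4i` are the maxima of their columns, `4i+3` and `4i+1` of their rows.
  split_ifs at h0 with h1 h2 h3 h4
  · left
    clear hcol
    simp only [if_pos h1] at hrow
    split_ifs at hrow <;> omega
  · right
    clear hrow
    simp only [if_neg h1, if_pos h2] at hcol
    split_ifs at hcol <;> omega
  · right
    clear hrow
    simp only [if_neg h1, if_neg h2, if_pos h3] at hcol
    split_ifs at hcol <;> omega
  · left
    clear hcol
    simp only [if_neg h1, if_neg h2, if_neg h3, if_pos h4] at hrow
    split_ifs at hrow <;> omega
  · exact absurd rfl h0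

/-- The next row is at least as good as the current one against the current column. -/
theorem FP_row_le {n : ℕ} {I J : ℕ → ℕ} (hFP : IsFPSeq n I J) {t : ℕ} (ht : 1 ≤ t) :
    Amat n (I t) (J t) ≤ Amat n (I (t + 1)) (J t) := by
  obtain ⟨s, rfl⟩ : ∃ s, t = s + 1 := ⟨t - 1, by omega⟩
  have hnew := (hFP.2 (s + 1 + 1) (by omega)).1 _ (hFP.1 (s + 1) ht).1
  have hold : ∑ r ∈ Finset.Icc 1 s, Amat n (I (s + 1 + 1)) (J r) ≤
      ∑ r ∈ Finset.Icc 1 s, Amat n (I (s + 1)) (J r) := by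
    rcases Nat.eq_zero_or_pos s with rfl | hs
    · simp
    · exact (hFP.2 (s + 1) (by omega)).1 _ (hFP.1 (s + 1 + 1) (by omega)).1
  rw [Nat.add_sub_cancel, Finset.sum_Icc_succ_top (by omega),
    Finset.sum_Icc_succ_top (by omega)] at hnew
  linarith

/-- The next column is at least as good as the current one against the current row. -/
theorem FP_col_le {n : ℕ} {I J : ℕ → ℕ} (hFP : IsFPSeq n I J) {t : ℕ} (ht : 1 ≤ t) :
    Amat n (I t) (J t) ≤ Amat n (I t) (J (t + 1)) := by
  obtain ⟨s, rfl⟩ : ∃ s, t = s + 1 := ⟨t - 1, by omega⟩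
  have hnew := (hFP.2 (s + 1 + 1) (by omega)).2 _ (hFP.1 (s + 1) ht).2
  have hold : ∑ r ∈ Finset.Icc 1 s, Amat n (I r) (J (s + 1 + 1)) ≤
      ∑ r ∈ Finset.Icc 1 s, Amat n (I r) (J (s + 1)) := by
    rcases Nat.eq_zero_or_pos s with rfl | hs
    · simp
    · exact (hFP.2 (s + 1) (by omega)).2 _ (hFP.1 (s + 1 + 1) (by omega)).2
  rw [Nat.add_sub_cancel, Finset.sum_Icc_succ_top (by omega),
    Finset.sum_Icc_succ_top (by omega)] at hnew
  linarith

/-- along the fictitious play sequence started at `(n, 1)`, the played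
entries of `A` are nonzero and nondecreasing. -/
theorem fp_values_monotone
    (n : ℕ) (hn : 4 ≤ n) (hneven : Even n)
    (I J : ℕ → ℕ) (hFP : IsFPSeq n I J) (hI1 : I 1 = n) (hJ1 : J 1 = 1) :
    ∀ t, 1 ≤ t →
      Amat n (I t) (J t) ≠ 0 ∧
      Amat n (I t) (J t) ≤ Amat n (I (t + 1)) (J (t + 1)) := by
  have step : ∀ t, 1 ≤ t → Amat n (I t) (J t) ≠ 0 →
      Amat n (I t) (J t) ≤ Amat n (I (t + 1)) (J (t + 1)) := by
    intro t ht h0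
    have hrow := FP_row_le hFP ht
    have hcol := FP_col_le hFP ht
    have key : I (t + 1) = I t ∨ J (t + 1) = J t := by
      simp only [Amat_eq_natAmat, Nat.cast_le, ne_eq, Nat.cast_eq_zero] at h0 hrow hcol
      exact row_eq_or_col_eq hneven h0 hrow hcol
    rcases key with h | h
    · rw [h]; exact hcol
    · rw [h]; exact hrow
  have nonzero : ∀ t, 1 ≤ t → Amat n (I t) (J t) ≠ 0 := by
    intro t ht
    induction t, ht using Nat.le_induction with
    | base =>
      rw [hI1, hJ1, Amat_eq_natAmat, Nat.cast_ne_zero]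
      unfold natAmat
      split_ifs <;> omega
    | succ t ht ih =>
      have hle := step t ht ih
      simp only [Amat_eq_natAmat, Nat.cast_le, ne_eq, Nat.cast_eq_zero] at ih hle ⊢
      omega
  exact fun t ht => ⟨nonzero t ht, step t ht (nonzero t ht)⟩
end
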